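/- Let μ, ν be Borel probability measures on ℝ with finite first moments. Then μ and ν are in convex order (μ ≼_c ν) if and only if ∫₀¹ g(u)·(F_ν^{-1}(u) − F_μ^{-1}(u)) du ≥ 0 for every bounded, nondecreasing, left-continuous function g : (0,1) → ℝ. -/

import Mathlib

open MeasureTheory

noncomputable section

/-- The quantile function `F_α⁻¹(u) = inf { y : α((-∞, y]) ≥ u }`. -/
def quantile (α : Measure ℝ) (u : ℝ) : ℝ :=
  sInf {y : ℝ | ENNReal.ofReal u ≤ α (Set.Iic y)}

/-- Convex order on `ℝ`: `∫ f dμ ≤ ∫ f dν` for all convex `f` integrable w.r.t. both. -/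
def ConvexOrder (μ ν : Measure ℝ) : Prop :=
  ∀ f : ℝ → ℝ, ConvexOn ℝ Set.univ f →
    Integrable f μ → Integrable f ν → ∫ x, f x ∂μ ≤ ∫ x, f x ∂ν

open Set Filter Topology ProbabilityTheory

/-- Lebesgue measure on the open unit interval. -/
def unitP : Measure ℝ := volume.restrict (Ioo (0 : ℝ) 1)

instance : IsProbabilityMeasure unitP := ⟨by simp [unitP]⟩

theorem unitP_ae : ∀ᵐ u ∂unitP, u ∈ Ioo (0 : ℝ) 1 := ae_restrict_mem measurableSet_Ioo

theorem quantile_le_iff (μ : Measure ℝ) [IsProbabilityMeasure μ] {u : ℝ} (hu : u ∈ Ioo (0 : ℝ) 1)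
    (y : ℝ) : quantile μ u ≤ y ↔ u ≤ cdf μ y := by
  have hS : {y : ℝ | ENNReal.ofReal u ≤ μ (Set.Iic y)} = {y : ℝ | u ≤ cdf μ y} := by
    ext z
    simp only [mem_ofPred_eq]
    rw [← ofReal_cdf, ENNReal.ofReal_le_ofReal_iff (cdf_nonneg μ z)]
  have hbdd : BddBelow {y : ℝ | u ≤ cdf μ y} := by
    obtain ⟨a, ha⟩ := ((tendsto_cdf_atBot μ).eventually (gt_mem_nhds hu.1)).exists
    refine ⟨a, fun z hz => ?_⟩
    by_contra hlt
    have := monotone_cdf μ (not_le.1 hlt).le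
    simp only [mem_ofPred_eq] at hz
    linarith
  have hne : {y : ℝ | u ≤ cdf μ y}.Nonempty := by
    obtain ⟨a, ha⟩ := ((tendsto_cdf_atTop μ).eventually (lt_mem_nhds hu.2)).exists
    exact ⟨a, ha.le⟩
  unfold quantile
  rw [hS]
  constructor
  · intro h
    have hgt : ∀ z, y < z → u ≤ cdf μ z := by
      intro z hz
      obtain ⟨w, hw, hwz⟩ := exists_lt_of_csInf_lt hne (lt_of_le_of_lt h hz)
      exact le_trans hw (monotone_cdf μ hwz.le)
    have hc : Tendsto (cdf μ) (𝓝[>] y) (𝓝 (cdf μ y)) :=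
      ((cdf μ).right_continuous y).mono_left (nhdsWithin_mono _ Ioi_subset_Ici_self)
    refine ge_of_tendsto hc ?_
    filter_upwards [self_mem_nhdsWithin] with z hz using hgt z hz
  · intro h
    exact csInf_le hbdd h

theorem quantile_mono (μ : Measure ℝ) [IsProbabilityMeasure μ] :
    MonotoneOn (quantile μ) (Ioo (0 : ℝ) 1) := by
  intro u hu v hv huv
  rw [quantile_le_iff μ hu]
  exact huv.trans ((quantile_le_iff μ hv _).1 le_rfl)

theorem quantile_aem (μ : Measure ℝ) [IsProbabilityMeasure μ] :
    AEMeasurable (quantile μ) unitP :=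
  aemeasurable_restrict_of_monotoneOn measurableSet_Ioo (quantile_mono μ)

theorem quantile_map (μ : Measure ℝ) [IsProbabilityMeasure μ] :
    unitP.map (quantile μ) = μ := by
  have : IsProbabilityMeasure (unitP.map (quantile μ)) :=
    Measure.isProbabilityMeasure_map (quantile_aem μ)
  refine Measure.ext_of_Iic _ _ fun y => ?_
  rw [Measure.map_apply_of_aemeasurable (quantile_aem μ) measurableSet_Iic]
  have h1 : unitP (quantile μ ⁻¹' Iic y) = unitP (Iic (cdf μ y)) := by
    apply measure_congr
    filter_upwards [unitP_ae] with u hu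
    exact propext (quantile_le_iff μ hu y)
  rw [h1, unitP, restrict_Ioo_eq_restrict_Ioc, Measure.restrict_apply measurableSet_Iic,
    inter_comm, Ioc_inter_Iic, inf_eq_right.2 (cdf_le_one μ y), Real.volume_Ioc, sub_zero,
    ofReal_cdf]

theorem integrable_quantile (μ : Measure ℝ) [IsProbabilityMeasure μ] {f : ℝ → ℝ}
    (hf : Integrable f μ) : Integrable (fun u => f (quantile μ u)) unitP := by
  have := hf
  rw [← quantile_map μ] at this
  exact this.comp_aemeasurable (quantile_aem μ)

theorem integral_quantile (μ : Measure ℝ) [IsProbabilityMeasure μ] {f : ℝ → ℝ}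
    (hf : Integrable f μ) : ∫ u, f (quantile μ u) ∂unitP = ∫ x, f x ∂μ := by
  have := hf.aestronglyMeasurable
  rw [← quantile_map μ] at this
  conv_rhs => rw [← quantile_map μ]
  rw [integral_map (quantile_aem μ) this]

theorem integrable_id_of_abs (μ : Measure ℝ) (h : Integrable (fun x => |x|) μ) :
    Integrable (fun x : ℝ => x) μ :=
  (integrable_norm_iff measurable_id.aestronglyMeasurable).1 h

theorem interval_eq (h : ℝ → ℝ) : ∫ u in (0 : ℝ)..1, h u = ∫ u, h u ∂unitP := by
  rw [intervalIntegral.integral_of_le zero_le_one, unitP, restrict_Ioo_eq_restrict_Ioc]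

theorem exists_ext {g : ℝ → ℝ} {M : ℝ} (hM : ∀ u ∈ Ioo (0 : ℝ) 1, |g u| ≤ M)
    (hg : MonotoneOn g (Ioo (0 : ℝ) 1)) :
    ∃ G : ℝ → ℝ, Monotone G ∧ (∀ u, |G u| ≤ M) ∧ EqOn g G (Ioo (0 : ℝ) 1) := by
  have hM0 : 0 ≤ M := (abs_nonneg _).trans (hM (1/2) (by norm_num))
  obtain ⟨G, hG, hE⟩ := hg.exists_monotone_extension
    ⟨-M, by rintro _ ⟨u, hu, rfl⟩; exact (abs_le.1 (hM u hu)).1⟩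
    ⟨M, by rintro _ ⟨u, hu, rfl⟩; exact (abs_le.1 (hM u hu)).2⟩
  refine ⟨fun u => max (-M) (min M (G u)), ?_, ?_, ?_⟩
  · intro u v h
    exact max_le_max le_rfl (min_le_min le_rfl (hG h))
  · intro u
    exact abs_le.2 ⟨le_max_left _ _, max_le (by linarith) (min_le_left _ _)⟩
  · intro u hu
    have := abs_le.1 (hM u hu)
    simp only
    rw [← hE hu, min_eq_right this.2, max_eq_right this.1]

theorem integrable_bdd_mul {G d : ℝ → ℝ} {M : ℝ} (hG : Monotone G) (hM : ∀ u, |G u| ≤ M)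
    (hd : Integrable d unitP) : Integrable (fun u => G u * d u) unitP :=
  hd.bdd_mul (c := M) hG.measurable.aestronglyMeasurable (ae_of_all _ hM)

/-- The hypothesis for left-continuous functions implies it for all bounded monotone functions. -/
theorem drop_leftcont {d : ℝ → ℝ}
    (H : ∀ g : ℝ → ℝ,
        (∃ M : ℝ, ∀ u ∈ Set.Ioo (0 : ℝ) 1, |g u| ≤ M) →
        MonotoneOn g (Set.Ioo (0 : ℝ) 1) →
        (∀ u ∈ Set.Ioo (0 : ℝ) 1, ContinuousWithinAt g (Set.Iio u) u) →
        0 ≤ ∫ u in (0 : ℝ)..1, g u * d u)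
    {G : ℝ → ℝ} {M : ℝ} (hG : Monotone G) (hM : ∀ u, |G u| ≤ M) :
    0 ≤ ∫ u, G u * d u ∂unitP := by
  have h := H (Function.leftLim G) ⟨M, fun u _ => ?_⟩ (hG.leftLim.monotoneOn _) ?_
  · rw [interval_eq] at h
    refine h.trans_eq (integral_congr_ae ?_)
    have hc : ∀ᵐ u ∂(volume : Measure ℝ), ContinuousAt G u := by
      rw [ae_iff]
      exact hG.countable_not_continuousAt.measure_zero (volume : Measure ℝ)
    have hc' : ∀ᵐ u ∂unitP, ContinuousAt G u := by
      unfold unitP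
      exact ae_restrict_of_ae hc
    filter_upwards [hc'] with u hu
    have hl : Function.leftLim G u = G u :=
      hG.continuousWithinAt_Iio_iff_leftLim_eq.1 hu.continuousWithinAt
    rw [hl]
  · refine abs_le.2 ⟨?_, (hG.leftLim_le le_rfl).trans (abs_le.1 (hM u)).2⟩
    exact (abs_le.1 (hM (u - 1))).1.trans (hG.le_leftLim (by linarith))
  · intro u _
    exact (continuousWithinAt_leftLim_Iic (hG.tendsto_leftLim u)).mono Iio_subset_Iic_self

theorem exists_subgradient {f : ℝ → ℝ} (hf : ConvexOn ℝ univ f) :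
    ∃ s : ℝ → ℝ, Monotone s ∧ ∀ x y, s x * (y - x) ≤ f y - f x := by
  have key : ∀ x y, derivWithin f (Ioi x) x * (y - x) ≤ f y - f x := by
    intro x y
    have hx : x ∈ interior (univ : Set ℝ) := by simp
    rcases lt_trichotomy x y with h | h | h
    · have := hf.rightDeriv_le_slope_of_mem_interior hx (mem_univ y) h
      rw [slope_def_field, le_div_iff₀ (by linarith)] at this
      exact this
    · subst h; simp
    · have := (hf.slope_le_leftDeriv_of_mem_interior (mem_univ y) hx h).trans
        (hf.leftDeriv_le_rightDeriv_of_mem_interior hx)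
      rw [slope_def_field, div_le_iff₀ (by linarith)] at this
      linarith
  refine ⟨_, ?_, key⟩
  intro x y hxy
  exact hf.monotoneOn_rightDeriv (by simp) (by simp) hxy

theorem convex_of_subgradient {f s : ℝ → ℝ} (h : ∀ x y, s x * (y - x) ≤ f y - f x) :
    ConvexOn ℝ univ f := by
  refine ⟨convex_univ, fun x _ y _ a b ha hb hab => ?_⟩
  simp only [smul_eq_mul]
  have h1 := mul_le_mul_of_nonneg_left (h (a * x + b * y) x) ha
  have h2 := mul_le_mul_of_nonneg_left (h (a * x + b * y) y) hb
  have e : a = 1 - b := by linarith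
  subst e
  nlinarith

theorem clip_mul_le {n g d D : ℝ} (hn : 0 ≤ n) (h : g * d ≤ D) :
    max (-n) (min n g) * d ≤ max D 0 := by
  rcases le_total 0 (g * d) with hgd | hgd
  · refine le_trans ?_ (h.trans (le_max_left _ _))
    rcases le_total 0 g with hg | hg
    · rw [max_eq_right (by linarith [le_min hn hg])]
      rcases le_or_gt 0 d with hd | hd
      · exact mul_le_mul_of_nonneg_right (min_le_right _ _) hd
      · have : g = 0 := by nlinarith
        simp [this, hn]
    · rw [min_eq_right (by linarith)]
      rcases le_or_gt d 0 with hd | hd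
      · exact mul_le_mul_of_nonpos_right (le_max_right _ _) hd
      · have : g = 0 := by nlinarith
        simp [this, hn]
  · refine le_trans ?_ (le_max_right _ _)
    rcases le_total 0 d with hd | hd
    · rcases le_or_gt g 0 with hg | hg
      · exact mul_nonpos_of_nonpos_of_nonneg
          (max_le (by linarith) ((min_le_right _ _).trans hg)) hd
      · have : d = 0 := by nlinarith
        simp [this]
    · rcases le_or_gt 0 g with hg | hg
      · exact mul_nonpos_of_nonneg_of_nonpos
          ((le_min hn hg).trans (le_max_right _ _)) hd
      · have : d = 0 := by nlinarith
        simp [this]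

theorem reverse_dir (μ ν : Measure ℝ)
    [IsProbabilityMeasure μ] [IsProbabilityMeasure ν]
    (hμ : Integrable (fun x => |x|) μ) (hν : Integrable (fun y => |y|) ν)
    (Hyp : ∀ g : ℝ → ℝ,
        (∃ M : ℝ, ∀ u ∈ Set.Ioo (0 : ℝ) 1, |g u| ≤ M) →
        MonotoneOn g (Set.Ioo (0 : ℝ) 1) →
        (∀ u ∈ Set.Ioo (0 : ℝ) 1, ContinuousWithinAt g (Set.Iio u) u) →
        0 ≤ ∫ u in (0 : ℝ)..1, g u * (quantile ν u - quantile μ u)) :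
    ConvexOrder μ ν := by
  intro f hf hfμ hfν
  obtain ⟨s, hs, hsub⟩ := exists_subgradient hf
  have iμ := integrable_quantile μ (integrable_id_of_abs μ hμ)
  have iν := integrable_quantile ν (integrable_id_of_abs ν hν)
  have id : Integrable (fun u => quantile ν u - quantile μ u) unitP := iν.sub iμ
  have jμ := integrable_quantile μ hfμ
  have jν := integrable_quantile ν hfν
  set d : ℝ → ℝ := fun u => quantile ν u - quantile μ u with hd
  set D : ℝ → ℝ := fun u => f (quantile ν u) - f (quantile μ u) with hD
  have iD : Integrable D unitP := jν.sub jμ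
  have hext : ∀ n : ℕ, ∃ G : ℝ → ℝ, Monotone G ∧ (∀ u, |G u| ≤ (n : ℝ)) ∧
      EqOn (fun u => max (-(n : ℝ)) (min n (s (quantile μ u)))) G (Ioo (0 : ℝ) 1) := by
    intro n
    have hn : (0 : ℝ) ≤ n := n.cast_nonneg
    apply exists_ext
    · intro u _
      exact abs_le.2 ⟨le_max_left _ _, max_le (by linarith) (min_le_left _ _)⟩
    · intro u hu v hv huv
      exact max_le_max le_rfl (min_le_min le_rfl (hs (quantile_mono μ hu hv huv)))
  choose G hGm hGb hGe using hext
  set H : ℝ → ℝ := fun u => max (D u) 0 with hH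
  have iH : Integrable H unitP := iD.pos_part
  have iGd : ∀ n, Integrable (fun u => G n u * d u) unitP := fun n =>
    integrable_bdd_mul (hGm n) (hGb n) id
  have hle : ∀ n, ∫⁻ u, ENNReal.ofReal (H u - G n u * d u) ∂unitP
      ≤ ENNReal.ofReal (∫ u, H u ∂unitP) := by
    intro n
    have iHG : Integrable (fun u => H u - G n u * d u) unitP := iH.sub (iGd n)
    rw [← ofReal_integral_eq_lintegral_ofReal iHG]
    · apply ENNReal.ofReal_le_ofReal
      rw [integral_sub iH (iGd n)]
      have := drop_leftcont Hyp (hGm n) (hGb n)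
      linarith
    · filter_upwards [unitP_ae] with u hu
      have h1 := hGe n hu
      simp only at h1
      simp only [Pi.zero_apply, sub_nonneg, ← h1]
      exact clip_mul_le n.cast_nonneg (hsub _ _)
  have hfatou := lintegral_liminf_le' (μ := unitP) (u := atTop)
    (f := fun (n : ℕ) u => ENNReal.ofReal (H u - G n u * d u))
    (fun n => (iH.sub (iGd n)).aestronglyMeasurable.aemeasurable.ennreal_ofReal)
  have h2 : liminf (fun n : ℕ => ∫⁻ u, ENNReal.ofReal (H u - G n u * d u) ∂unitP) atTop
      ≤ ENNReal.ofReal (∫ u, H u ∂unitP) :=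
    liminf_le_of_frequently_le' (Frequently.of_forall hle)
  have h3 : ∫⁻ u, ENNReal.ofReal (H u - D u) ∂unitP
      ≤ ∫⁻ u, liminf (fun n : ℕ => ENNReal.ofReal (H u - G n u * d u)) atTop ∂unitP := by
    apply lintegral_mono_ae
    filter_upwards [unitP_ae] with u hu
    have : Tendsto (fun n : ℕ => ENNReal.ofReal (H u - G n u * d u)) atTop
        (𝓝 (ENNReal.ofReal (H u - s (quantile μ u) * d u))) := by
      apply tendsto_const_nhds.congr'
      obtain ⟨N, hN⟩ := exists_nat_ge |s (quantile μ u)|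
      filter_upwards [eventually_ge_atTop N] with n hn
      have hn' : (N : ℝ) ≤ n := by exact_mod_cast hn
      have h4 := abs_le.1 (hN.trans hn')
      have h1 := hGe n hu
      simp only at h1
      rw [← h1, min_eq_right h4.2, max_eq_right h4.1]
    rw [this.liminf_eq]
    apply ENNReal.ofReal_le_ofReal
    have := hsub (quantile μ u) (quantile ν u)
    simp only [hD, hd]
    linarith
  have h4 := h3.trans (hfatou.trans h2)
  have iHD : Integrable (fun u => H u - D u) unitP := iH.sub iD
  have hH0 : 0 ≤ ∫ u, H u ∂unitP := integral_nonneg fun u => le_max_right _ _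
  rw [← ofReal_integral_eq_lintegral_ofReal iHD
    (ae_of_all _ fun u => sub_nonneg.2 (le_max_left _ _)),
    ENNReal.ofReal_le_ofReal_iff hH0] at h4
  rw [integral_sub iH iD] at h4
  have h5 : ∫ u, D u ∂unitP = ∫ x, f x ∂ν - ∫ x, f x ∂μ := by
    rw [hD, integral_sub jν jμ, integral_quantile ν hfν, integral_quantile μ hfμ]
  linarith

theorem forward_dir (μ ν : Measure ℝ)
    [IsProbabilityMeasure μ] [IsProbabilityMeasure ν]
    (hμ : Integrable (fun x => |x|) μ) (hν : Integrable (fun y => |y|) ν)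
    (hc : ConvexOrder μ ν) (g : ℝ → ℝ) (M : ℝ)
    (hM : ∀ u ∈ Set.Ioo (0 : ℝ) 1, |g u| ≤ M)
    (hg : MonotoneOn g (Set.Ioo (0 : ℝ) 1)) :
    0 ≤ ∫ u in (0 : ℝ)..1, g u * (quantile ν u - quantile μ u) := by
  obtain ⟨G, hG, hGM, hGe⟩ := exists_ext hM hg
  rw [interval_eq]
  set h : ℝ → ℝ := fun y => G (cdf ν y) with hh
  have hmono : Monotone h := hG.comp (monotone_cdf ν)
  have hint : ∀ a b, IntervalIntegrable h volume a b := fun a b => hmono.intervalIntegrable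
  set f : ℝ → ℝ := fun x => ∫ y in (0 : ℝ)..x, h y with hfdef
  have hdiff : ∀ x y, f y - f x = ∫ t in x..y, h t := fun x y =>
    intervalIntegral.integral_interval_sub_left (hint _ _) (hint _ _)
  have hsub : ∀ x c, (∀ t, x < t → c ≤ h t) → (∀ t, t < x → h t ≤ c) →
      ∀ y, c * (y - x) ≤ f y - f x := by
    intro x c h1 h2 y
    rw [hdiff]
    rcases le_total x y with hxy | hxy
    · have := intervalIntegral.integral_mono_on_of_le_Ioo hxy
        (intervalIntegrable_const (c := c)) (hint x y) (fun t ht => h1 t ht.1)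
      rw [intervalIntegral.integral_const, smul_eq_mul] at this
      linarith
    · have := intervalIntegral.integral_mono_on_of_le_Ioo hxy (hint y x)
        (intervalIntegrable_const (c := c)) (fun t ht => h2 t ht.2)
      rw [intervalIntegral.integral_const, smul_eq_mul] at this
      rw [intervalIntegral.integral_symm]
      linarith
  have hconv : ConvexOn ℝ univ f := convex_of_subgradient (s := h) fun x y =>
    hsub x (h x) (fun t ht => hmono ht.le) (fun t ht => hmono ht.le) y
  have hcont : Continuous f := by
    rw [← continuousOn_univ]
    exact hconv.continuousOn isOpen_univ
  have hbound : ∀ x, ‖f x‖ ≤ M * |x| := by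
    intro x
    have := intervalIntegral.norm_integral_le_of_norm_le_const (a := 0) (b := x) (f := h) (C := M)
      (fun t _ => hGM _)
    simpa using this
  have hfμ : Integrable f μ := (hμ.const_mul M).mono' hcont.aestronglyMeasurable
    (ae_of_all _ hbound)
  have hfν : Integrable f ν := (hν.const_mul M).mono' hcont.aestronglyMeasurable
    (ae_of_all _ hbound)
  have h0 := hc f hconv hfμ hfν
  have iμ := integrable_quantile μ (integrable_id_of_abs μ hμ)
  have iν := integrable_quantile ν (integrable_id_of_abs ν hν)
  have jμ := integrable_quantile μ hfμ
  have jν := integrable_quantile ν hfν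
  have i1 : Integrable (fun u => G u * (quantile ν u - quantile μ u)) unitP :=
    integrable_bdd_mul hG hGM (iν.sub iμ)
  have e1 : ∫ u, g u * (quantile ν u - quantile μ u) ∂unitP
      = ∫ u, G u * (quantile ν u - quantile μ u) ∂unitP := by
    apply integral_congr_ae
    filter_upwards [unitP_ae] with u hu
    rw [hGe hu]
  have h1 : ∫ u, (f (quantile ν u) - f (quantile μ u)) ∂unitP
      ≤ ∫ u, G u * (quantile ν u - quantile μ u) ∂unitP := by
    apply integral_mono_ae (jν.sub jμ) i1
    filter_upwards [unitP_ae] with u hu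
    have := hsub (quantile ν u) (G u)
      (fun t ht => hG ((quantile_le_iff ν hu t).1 ht.le))
      (fun t ht => hG (by
        by_contra hcon
        have := (quantile_le_iff ν hu t).2 (not_le.1 hcon).le
        linarith)) (quantile μ u)
    simp only [Pi.sub_apply]
    linarith
  rw [integral_sub jν jμ, integral_quantile ν hfν, integral_quantile μ hfμ] at h1
  rw [e1]
  linarith

theorem stmt16 (μ ν : Measure ℝ)
    [IsProbabilityMeasure μ] [IsProbabilityMeasure ν]
    (hμ : Integrable (fun x => |x|) μ) (hν : Integrable (fun y => |y|) ν) :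
    ConvexOrder μ ν ↔
      ∀ g : ℝ → ℝ,
        (∃ M : ℝ, ∀ u ∈ Set.Ioo (0 : ℝ) 1, |g u| ≤ M) →
        MonotoneOn g (Set.Ioo (0 : ℝ) 1) →
        (∀ u ∈ Set.Ioo (0 : ℝ) 1, ContinuousWithinAt g (Set.Iio u) u) →
        0 ≤ ∫ u in (0 : ℝ)..1, g u * (quantile ν u - quantile μ u) := by
  constructor
  · rintro hc g ⟨M, hM⟩ hg _
    exact forward_dir μ ν hμ hν hc g M hM hg
  · exact reverse_dir μ ν hμ hν
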